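/- Let G ⊆ UT(n,ℝ) be a real unipotent group and let α ∈ G^♯. Then there exist g ∈ G and a real algebraic subgroup H of G such that the coset gH is near α, and gH ⊆ g'H' for every g' ∈ G and every real algebraic subgroup H' of G such that the coset g'H' is near α. In other words, among all cosets of real algebraic subgroups of G that are near α, there is a smallest one with respect to inclusion. -/

import Mathlib

open Pointwise Filter

noncomputable section

/-- Square matrices of size `n` over `R`. -/
abbrev Mat (n : ℕ) (R : Type) : Type := Matrix (Fin n) (Fin n) R

/-- The set `UT(n,ℝ)` of upper triangular matrices with `1`s on the diagonal. -/
def UTset (n : ℕ) : Set (Mat n ℝ) :=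
  {A | (∀ i, A i i = 1) ∧ ∀ i j : Fin n, (j : ℕ) < (i : ℕ) → A i j = 0}

/-- The entries of a matrix, as a point of `ℝ^(n²)`. -/
def matEval {n : ℕ} (A : Mat n ℝ) : Fin n × Fin n → ℝ := fun ij => A ij.1 ij.2

/-- A real unipotent group: a subgroup of `UT(n,ℝ)` which is the common zero set in
`UT(n,ℝ)` of a family of real polynomials in the matrix entries. -/
def IsRealUnipotentGroup (n : ℕ) (G : Set (Mat n ℝ)) : Prop :=
  (∃ S : Set (MvPolynomial (Fin n × Fin n) ℝ),
      G = {A | A ∈ UTset n ∧ ∀ p ∈ S, MvPolynomial.eval (matEval A) p = 0}) ∧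
    (1 : Mat n ℝ) ∈ G ∧ (∀ a ∈ G, ∀ b ∈ G, a * b ∈ G) ∧ ∀ a ∈ G, a⁻¹ ∈ G

/-- A real algebraic subgroup of a real unipotent group `G`. -/
def IsRealAlgSubgroup (n : ℕ) (G H : Set (Mat n ℝ)) : Prop :=
  H ⊆ G ∧ IsRealUnipotentGroup n H

/-- `N` is a normal subgroup-set of `G`. -/
def IsNormalIn (n : ℕ) (G N : Set (Mat n ℝ)) : Prop :=
  ∀ g ∈ G, ∀ x ∈ N, g * x * g⁻¹ ∈ N

/-- `Γ` is a lattice in `G`: a discrete subgroup which is cocompact, i.e. there is a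
compact `K ⊆ G` with `K·Γ = G` (equivalently, `G/Γ` is compact). -/
def IsLatticeIn (n : ℕ) (G Γ : Set (Mat n ℝ)) : Prop :=
  Γ ⊆ G ∧ (1 : Mat n ℝ) ∈ Γ ∧ (∀ a ∈ Γ, ∀ b ∈ Γ, a * b ∈ Γ) ∧ (∀ a ∈ Γ, a⁻¹ ∈ Γ) ∧
    DiscreteTopology ↥Γ ∧
    ∃ K : Set (Mat n ℝ), K ⊆ G ∧ IsCompact K ∧ ∀ g ∈ G, ∃ k ∈ K, ∃ γ ∈ Γ, g = k * γ

/-- `H` is `Γ`-rational: `Γ ∩ H` is a lattice in `H`. -/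
def IsRationalFor (n : ℕ) (Γ H : Set (Mat n ℝ)) : Prop :=
  IsLatticeIn n H (Γ ∩ H)

/-- The hyperreal matrix represented by a sequence of real matrices. -/
def matOfSeq (n : ℕ) (u : ℕ → Mat n ℝ) : Mat n Hyperreal :=
  Matrix.of fun i j => Hyperreal.ofSeq fun k => u k i j

/-- The nonstandard extension `S^♯` of a set `S` of real matrices: hyperreal matrices
represented by sequences landing in `S` on a set of indices in the ultrafilter. -/
def matSharp (n : ℕ) (S : Set (Mat n ℝ)) : Set (Mat n Hyperreal) :=
  {A | ∃ u : ℕ → Mat n ℝ, (∀ᶠ k in hyperfilter ℕ, u k ∈ S) ∧ A = matOfSeq n u}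

/-- The canonical embedding of real matrices into hyperreal matrices. -/
def matCast {n : ℕ} (A : Mat n ℝ) : Mat n Hyperreal :=
  Matrix.of fun i j => (A i j : Hyperreal)

/-- `μ(G)`: elements of `G^♯` all of whose entries are infinitesimally close to the
corresponding entries of the identity matrix. -/
def muSet (n : ℕ) (G : Set (Mat n ℝ)) : Set (Mat n Hyperreal) :=
  {A | A ∈ matSharp n G ∧ ∀ i j, Hyperreal.Infinitesimal (A i j - (1 : Mat n Hyperreal) i j)}

/-- The coset `gH` is near `α`, i.e. `α ∈ μ(G)·g·H^♯`. -/
def NearCoset (n : ℕ) (G : Set (Mat n ℝ)) (g : Mat n ℝ) (H : Set (Mat n ℝ))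
    (α : Mat n Hyperreal) : Prop :=
  α ∈ muSet n G * ({matCast g} * matSharp n H)

/-- The set of standard parts of the finite elements of a set of hyperreal matrices. -/
def matStSet (n : ℕ) (A : Set (Mat n Hyperreal)) : Set (Mat n ℝ) :=
  {B | ∃ a ∈ A, ∀ i j, Hyperreal.IsSt (a i j) (B i j)}

/-- A polynomial map `ℝ^d → Mat n ℝ`. -/
def IsPolyMapVec (d n : ℕ) (F : (Fin d → ℝ) → Mat n ℝ) : Prop :=
  ∃ P : Fin n → Fin n → MvPolynomial (Fin d) ℝ,
    ∀ x i j, F x i j = MvPolynomial.eval x (P i j)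

/-- The inclusion `ℝ →+* ℝ*` as a ring homomorphism. -/
def realHyperRingHom : ℝ →+* Hyperreal where
  toFun r := (r : Hyperreal)
  map_one' := Hyperreal.coe_one
  map_mul' := Hyperreal.coe_mul
  map_zero' := Hyperreal.coe_zero
  map_add' := Hyperreal.coe_add

/-- A semialgebraic subset of matrix space: a finite union of sets defined by finitely
many polynomial equations and finitely many strict polynomial inequalities. -/
def IsSemialgebraic (n : ℕ) (S : Set (Mat n ℝ)) : Prop :=
  ∃ (k : ℕ) (P Q : Fin k → Finset (MvPolynomial (Fin n × Fin n) ℝ)),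
    S = ⋃ t : Fin k, {A | (∀ p ∈ P t, MvPolynomial.eval (matEval A) p = 0) ∧
      ∀ q ∈ Q t, 0 < MvPolynomial.eval (matEval A) q}

/-!
If `g₁ H₁` and `g₂ H₂` are both near `α`, represented by `u`, then `u k` is infinitesimally close to
`g₁ a k` and to `g₂ b k` with `a k ∈ H₁`, `b k ∈ H₂`, so `a k * (b k)⁻¹` tends to `g₁⁻¹ g₂`. Any
such pair of sequences becomes convergent after right multiplication by a common sequence in
`H₁ ∩ H₂`: two sequences in `H₁` and `H₂` are made equal one matrix position at a time, using the
polynomial one-parameter groups `t ↦ x ^ t` of unitriangular matrices, along which the first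
differing entry varies linearly. The limits give a coset of `H₁ ∩ H₂` inside both `g₁ H₁` and
`g₂ H₂` that is near `α`. Near cosets being Zariski closed, Noetherianity gives a minimal one, and a
minimal near coset is contained in all others.
-/

open scoped Polynomial Topology

local notation "SL" => Matrix.SpecialLinearGroup

section ZariskiClosed

variable {m n R K : Type*}

/-- Zariski closed sets of matrices: the common zero sets of families of polynomials in the
matrix entries. -/
def IsZariskiClosed [CommSemiring R] (V : Set (Matrix m n R)) : Prop :=
  ∃ S : Set (MvPolynomial (m × n) R),
    V = {A | ∀ p ∈ S, MvPolynomial.eval (fun ij => A ij.1 ij.2) p = 0}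

theorem IsZariskiClosed.inter [CommSemiring R] {V W : Set (Matrix m n R)}
    (hV : IsZariskiClosed V) (hW : IsZariskiClosed W) : IsZariskiClosed (V ∩ W) := by
  obtain ⟨S, rfl⟩ := hV
  obtain ⟨T, rfl⟩ := hW
  refine ⟨S ∪ T, ?_⟩
  ext A
  simp only [Set.mem_inter_iff, Set.mem_ofPred_eq, Set.mem_union, or_imp, forall_and]

theorem IsZariskiClosed.preimage_mul_left [CommSemiring R] [Fintype m] {V : Set (Matrix m n R)}
    (hV : IsZariskiClosed V) (B : Matrix m m R) : IsZariskiClosed ((B * ·) ⁻¹' V) := by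
  obtain ⟨S, rfl⟩ := hV
  let φ (ij : m × n) : MvPolynomial (m × n) R :=
    ∑ r, MvPolynomial.C (B ij.1 r) * MvPolynomial.X (r, ij.2)
  have eval_φ (A : Matrix m n R) :
      MvPolynomial.eval (fun ij => A ij.1 ij.2) ∘ φ = fun ij => (B * A) ij.1 ij.2 := by
    ext ij
    simp [φ, Matrix.mul_apply]
  refine ⟨MvPolynomial.eval₂ MvPolynomial.C φ '' S, ?_⟩
  ext A
  simp only [Set.mem_preimage, Set.mem_ofPred_eq, Set.forall_mem_image,
    ← MvPolynomial.eval_assoc, eval_φ]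
  rfl

theorem IsZariskiClosed.isClosed [CommSemiring R] [TopologicalSpace R] [IsTopologicalSemiring R]
    [T1Space R] {V : Set (Matrix m n R)} (hV : IsZariskiClosed V) : IsClosed V := by
  obtain ⟨S, rfl⟩ := hV
  have entries_continuous : Continuous fun (A : Matrix m n R) (ij : m × n) => A ij.1 ij.2 :=
    continuous_pi fun ij => continuous_apply_apply ij.1 ij.2
  simp only [Set.ofPred_forall]
  exact isClosed_biInter fun p _ =>
    isClosed_singleton.preimage ((MvPolynomial.continuous_eval p).comp entries_continuous)

theorem IsZariskiClosed.map_eval_mem [CommRing R] [IsDomain R] {V : Set (Matrix m n R)}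
    (hV : IsZariskiClosed V) {P : Matrix m n R[X]} {T : Set R} (hT : T.Infinite)
    (hP : ∀ t ∈ T, P.map (Polynomial.eval t) ∈ V) (t : R) : P.map (Polynomial.eval t) ∈ V := by
  obtain ⟨S, rfl⟩ := hV
  intro p hp
  let q : R[X] := MvPolynomial.eval₂ Polynomial.C (fun ij => P ij.1 ij.2) p
  have eval_q (s : R) :
      q.eval s = MvPolynomial.eval (fun ij => P.map (Polynomial.eval s) ij.1 ij.2) p := by
    have eval_comp_C : (Polynomial.evalRingHom s).comp Polynomial.C = RingHom.id R := by
      ext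
      simp
    rw [MvPolynomial.polynomial_eval_eval₂, eval_comp_C]
    rfl
  have q_eq_zero : q = 0 :=
    Polynomial.eq_zero_of_infinite_isRoot q (hT.mono fun s hs => (eval_q s).trans (hP s hs p hp))
  rw [← eval_q, q_eq_zero, Polynomial.eval_zero]

theorem exists_minimal_of_isZariskiClosed [Field K] [Finite m] [Finite n]
    {F : Set (Set (Matrix m n K))} (hF : ∀ V ∈ F, IsZariskiClosed V) (hne : F.Nonempty) :
    ∃ V, Minimal (· ∈ F) V := by
  let I (V : Set (Matrix m n K)) : Ideal (MvPolynomial (m × n) K) :=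
    MvPolynomial.vanishingIdeal K ((fun A ij => A ij.1 ij.2) '' V)
  have mem_I {V : Set (Matrix m n K)} {p : MvPolynomial (m × n) K} :
      p ∈ I V ↔ ∀ A ∈ V, MvPolynomial.eval (fun ij => A ij.1 ij.2) p = 0 := by
    simp [I, MvPolynomial.mem_vanishingIdeal_iff, MvPolynomial.aeval_eq_eval]
  obtain ⟨V, hVF, hV⟩ := exists_maximalFor_of_wellFoundedGT (· ∈ F) I hne
  refine ⟨V, hVF, fun W hWF hWV A hA => ?_⟩
  have hIVW : I V ≤ I W := fun p hp => mem_I.2 fun B hB => mem_I.1 hp B (hWV hB)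
  obtain ⟨S, rfl⟩ := hF W hWF
  exact fun p hp => mem_I.1 (hV hWF hIVW (mem_I.2 fun B hB => hB p hp)) A hA

end ZariskiClosed

section Unitriangular

variable {m R : Type*} [LinearOrder m]

/-- The entry of a matrix at a position. The order dual on row indices makes `y ≤ x` mean that `y`
lies weakly below and to the left of `x`, so that for triangular matrices the entry of a product
at `x` only involves entries at positions `y ≤ x`. -/
def entry (A : Matrix m m R) (x : mᵒᵈ × m) : R :=
  A (OrderDual.ofDual x.1) x.2

variable [CommRing R]

/-- Upper unitriangular matrices, i.e. elements of `UT(n, R)`. -/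
def IsUnitriangular (A : Matrix m m R) : Prop :=
  A.IsUpperTriangular ∧ ∀ i, A i i = 1

theorem isUnitriangular_one : IsUnitriangular (1 : Matrix m m R) :=
  ⟨Matrix.blockTriangular_one, fun i => Matrix.one_apply_eq i⟩

variable [Fintype m] {A B A' B' X : Matrix m m R} {x : mᵒᵈ × m}

theorem IsUnitriangular.det_eq_one (hA : IsUnitriangular A) : A.det = 1 := by
  rw [Matrix.det_of_isUpperTriangular hA.1, Finset.prod_eq_one fun i _ => hA.2 i]

theorem IsUnitriangular.entry_mul_left (hA : IsUnitriangular A)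
    (hX : ∀ y < x, entry X y = 0) : entry (A * X) x = entry X x := by
  obtain ⟨i, j⟩ := x
  simp only [entry, Matrix.mul_apply]
  rw [Finset.sum_eq_single (OrderDual.ofDual i), hA.2, one_mul]
  · intro r _ hr
    rcases hr.lt_or_gt with hri | hir
    · rw [hA.1 hri, zero_mul]
    · rw [show X r j = 0 from hX (OrderDual.toDual r, j) (Prod.mk_lt_mk_of_lt_of_le hir le_rfl),
        mul_zero]
  · simp

theorem IsUnitriangular.entry_mul_right (hA : IsUnitriangular A)
    (hX : ∀ y < x, entry X y = 0) : entry (X * A) x = entry X x := by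
  obtain ⟨i, j⟩ := x
  simp only [entry, Matrix.mul_apply]
  rw [Finset.sum_eq_single j, hA.2, mul_one]
  · intro r _ hr
    rcases hr.lt_or_gt with hrj | hjr
    · rw [show X (OrderDual.ofDual i) r = 0 from hX (i, r) (Prod.mk_lt_mk_of_le_of_lt le_rfl hrj),
        zero_mul]
    · rw [hA.1 hjr, mul_zero]
  · simp

theorem IsUnitriangular.entry_mul_sub_entry_mul (hA' : IsUnitriangular A')
    (hB : IsUnitriangular B) (hAB : ∀ y < x, entry A y = entry B y)
    (hAB' : ∀ y < x, entry A' y = entry B' y) :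
    entry (A * A') x - entry (B * B') x =
      entry A x - entry B x + (entry A' x - entry B' x) := by
  have entry_sub (Y Z : Matrix m m R) (y) : entry (Y - Z) y = entry Y y - entry Z y := rfl
  have left := hA'.entry_mul_right (X := A - B) fun y hy => by rw [entry_sub, hAB y hy, sub_self]
  have right := hB.entry_mul_left (X := A' - B') fun y hy => by rw [entry_sub, hAB' y hy, sub_self]
  simp only [sub_mul, mul_sub, entry_sub] at left right
  linear_combination left + right

theorem IsUnitriangular.mul (hA : IsUnitriangular A) (hB : IsUnitriangular B) :
    IsUnitriangular (A * B) := by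
  refine ⟨Matrix.BlockTriangular.mul hA.1 hB.1, fun i => ?_⟩
  rw [← hB.2 i]
  refine hA.entry_mul_left (x := (OrderDual.toDual i, i)) fun y hy => hB.1 ?_
  rcases Prod.lt_iff.1 hy with ⟨h₁, h₂⟩ | ⟨h₁, h₂⟩
  · exact h₂.trans_lt h₁
  · exact h₂.trans_le h₁

theorem IsUnitriangular.isNilpotent_sub_one (hA : IsUnitriangular A) : IsNilpotent (A - 1) := by
  have charpoly_eq : (A - 1).charpoly = Polynomial.X ^ Fintype.card m := by
    rw [Matrix.charpoly_of_isUpperTriangular _ (hA.1.sub Matrix.blockTriangular_one)]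
    simp [hA.2]
  have cayley_hamilton := Matrix.aeval_self_charpoly (A - 1)
  rw [charpoly_eq, map_pow, Polynomial.aeval_X] at cayley_hamilton
  exact ⟨_, cayley_hamilton⟩

end Unitriangular

theorem one_add_pow_eq_sum_of_pow_eq_zero {R : Type*} [Ring R] {N : R} {r : ℕ} (hN : N ^ r = 0)
    (k : ℕ) : (1 + N) ^ k = ∑ j ∈ Finset.range r, k.choose j • N ^ j := by
  have expand : (1 + N) ^ k = ∑ j ∈ Finset.range (k + 1), k.choose j • N ^ j := by
    rw [add_comm, (Commute.one_right N).add_pow]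
    simp only [one_pow, mul_one, nsmul_eq_mul']
  rw [expand]
  rcases le_total (k + 1) r with hkr | hrk
  · refine Finset.sum_subset (Finset.range_mono hkr) fun j _ hj => ?_
    rw [Nat.choose_eq_zero_of_lt (by simpa using hj), zero_smul]
  · refine (Finset.sum_subset (Finset.range_mono hrk) fun j _ hj => ?_).symm
    rw [pow_eq_zero_of_le (by simpa using hj) hN, smul_zero]

theorem exists_map_eval_eq_one_add_pow_of_isNilpotent {m K : Type*} [Fintype m]
    [DecidableEq m] [Field K] [CharZero K] {N : Matrix m m K} (hN : IsNilpotent N) :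
    ∃ P : Matrix m m K[X], ∀ k : ℕ, P.map (Polynomial.eval (k : K)) = (1 + N) ^ k := by
  obtain ⟨r, hr⟩ := hN
  refine ⟨∑ j ∈ Finset.range r, (N ^ j).map fun a =>
    Polynomial.C (a / j.factorial) * descPochhammer K j, fun k => ?_⟩
  rw [one_add_pow_eq_sum_of_pow_eq_zero hr]
  ext p q
  simp only [Matrix.map_apply, Matrix.sum_apply, Polynomial.eval_finsetSum, Polynomial.eval_mul,
    Polynomial.eval_C, ← Nat.cast_smul_eq_nsmul K, Matrix.smul_apply, smul_eq_mul,
    Nat.cast_choose_eq_descPochhammer_div]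
  exact Finset.sum_congr rfl fun j _ => by ring

theorem smul_coe_subset_smul_coe_iff {Γ : Type*} [Group Γ] {g g' : Γ} {H H' : Subgroup Γ} :
    g • (H : Set Γ) ⊆ g' • (H' : Set Γ) ↔ g'⁻¹ * g ∈ H' ∧ H ≤ H' := by
  rw [Set.smul_set_subset_iff_subset_inv_smul_set, smul_smul]
  constructor
  · intro h
    have mem (x : Γ) (hx : x ∈ H) : g'⁻¹ * g * x ∈ H' := by
      simpa [Set.mem_smul_set_iff_inv_smul_mem, mul_assoc] using h hx
    have quotient_mem : g'⁻¹ * g ∈ H' := by simpa using mem 1 H.one_mem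
    exact ⟨quotient_mem, fun x hx => (mul_mem_cancel_left quotient_mem).1 (mem x hx)⟩
  · rintro ⟨quotient_mem, hle⟩ x hx
    simpa [Set.mem_smul_set_iff_inv_smul_mem, mul_assoc] using mul_mem quotient_mem (hle hx)

section Matrices

variable {m R : Type*} [DecidableEq m] [Fintype m] [CommRing R]

theorem inv_coe_specialLinearGroup (g : SL m R) : (g : Matrix m m R)⁻¹ = (g⁻¹ : SL m R) := by
  rw [Matrix.inv_def, g.det_coe, Ring.inverse_one, one_smul, Matrix.SpecialLinearGroup.coe_inv]

/-- The set of matrices underlying a subgroup of the special linear group. Every real unipotent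
group has this form. -/
def matrices (H : Subgroup (SL m R)) : Set (Matrix m m R) :=
  (fun g : SL m R => (g : Matrix m m R)) '' H

theorem coe_mem_matrices {H : Subgroup (SL m R)} {g : SL m R} :
    (g : Matrix m m R) ∈ matrices H ↔ g ∈ H :=
  Subtype.val_injective.mem_set_image

theorem matrices_inf (H₁ H₂ : Subgroup (SL m R)) :
    matrices (H₁ ⊓ H₂) = matrices H₁ ∩ matrices H₂ :=
  Set.image_inter Subtype.val_injective

theorem singleton_mul_matrices (g : SL m R) (H : Subgroup (SL m R)) :
    {(g : Matrix m m R)} * matrices H =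
      (fun x : SL m R => (x : Matrix m m R)) '' (g • (H : Set (SL m R))) := by
  rw [Set.singleton_mul, matrices, Set.image_image, ← Set.image_smul, Set.image_image]
  rfl

theorem singleton_mul_matrices_subset_iff {g g' : SL m R} {H H' : Subgroup (SL m R)} :
    {(g : Matrix m m R)} * matrices H ⊆ {(g' : Matrix m m R)} * matrices H' ↔
      g'⁻¹ * g ∈ H' ∧ H ≤ H' := by
  rw [singleton_mul_matrices, singleton_mul_matrices, ← smul_coe_subset_smul_coe_iff]
  exact Set.image_subset_image_iff Subtype.val_injective

end Matrices

section Algebraic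

variable {m K : Type*} [LinearOrder m] [Fintype m] [Field K]

/-- Algebraic groups of unitriangular matrices, viewed inside the special linear group so as to
have the structure of a topological group at hand. -/
structure IsAlgebraicUnitriangular (H : Subgroup (SL m K)) : Prop where
  isUnitriangular : ∀ g ∈ H, IsUnitriangular (g : Matrix m m K)
  isZariskiClosed : IsZariskiClosed (matrices H)

namespace IsAlgebraicUnitriangular

variable {H H₁ H₂ : Subgroup (SL m K)}

theorem inf (h₁ : IsAlgebraicUnitriangular H₁) (h₂ : IsAlgebraicUnitriangular H₂) :
    IsAlgebraicUnitriangular (H₁ ⊓ H₂) where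
  isUnitriangular g hg := h₁.isUnitriangular g hg.1
  isZariskiClosed := matrices_inf H₁ H₂ ▸ h₁.isZariskiClosed.inter h₂.isZariskiClosed

theorem isZariskiClosed_coset (hH : IsAlgebraicUnitriangular H) (g : SL m K) :
    IsZariskiClosed ({(g : Matrix m m K)} * matrices H) := by
  have isUnit_det : IsUnit (g : Matrix m m K).det := by simp
  rw [Set.singleton_mul, Set.image_eq_preimage_of_inverse
    (Matrix.nonsing_inv_mul_cancel_left _ · isUnit_det)
    (Matrix.mul_nonsing_inv_cancel_left _ · isUnit_det)]
  exact hH.isZariskiClosed.preimage_mul_left _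

theorem isClosed [TopologicalSpace K] [IsTopologicalSemiring K] [T1Space K]
    (hH : IsAlgebraicUnitriangular H) : IsClosed (H : Set (SL m K)) := by
  rw [← Set.preimage_image_eq (H : Set (SL m K)) Subtype.val_injective]
  exact hH.isZariskiClosed.isClosed.preimage continuous_subtype_val

theorem exists_oneParameter [CharZero K] [TopologicalSpace K] [IsTopologicalSemiring K]
    (hH : IsAlgebraicUnitriangular H) {u : SL m K} (hu : u ∈ H) :
    ∃ (γ : K → SL m K) (P : Matrix m m K[X]), Continuous γ ∧ (∀ t, γ t ∈ H) ∧
      (∀ k : ℕ, γ k = u ^ k) ∧ ∀ t, (γ t : Matrix m m K) = P.map (Polynomial.eval t) := by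
  obtain ⟨P, hP⟩ := exists_map_eval_eq_one_add_pow_of_isNilpotent
    (hH.isUnitriangular u hu).isNilpotent_sub_one
  have P_nat (k : ℕ) : P.map (Polynomial.eval (k : K)) = (u ^ k : SL m K) := by
    rw [hP, add_sub_cancel, Matrix.SpecialLinearGroup.coe_pow]
  have P_mem : ∀ t, P.map (Polynomial.eval t) ∈ matrices H := by
    refine hH.isZariskiClosed.map_eval_mem (Set.infinite_range_of_injective Nat.cast_injective) ?_
    rintro _ ⟨k, rfl⟩
    exact P_nat k ▸ coe_mem_matrices.2 (H.pow_mem hu k)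
  choose γ γ_mem coe_γ using P_mem
  have γ_cont : Continuous γ := continuous_induced_rng.2 <|
    (continuous_matrix fun i j => (P i j).continuous).congr fun t => (coe_γ t).symm
  exact ⟨γ, P, γ_cont, γ_mem, fun k => Subtype.ext ((coe_γ k).trans (P_nat k)), coe_γ⟩

end IsAlgebraicUnitriangular

end Algebraic

section Agreement

variable {m K : Type*} [LinearOrder m] [Fintype m] [Field K]

/-- The difference between the entries at `x` of the two components of a pair of matrices. On
pairs which agree below `x` it is additive, and it is the obstruction to agreement at `x`. -/
def entryGap (x : mᵒᵈ × m) (d : SL m K × SL m K) : K :=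
  entry d.1.1 x - entry d.2.1 x

/-- Pairs of unitriangular matrices with the same entries at all positions in `S`. Such pairs are
closed under multiplication because `S` is a lower set. -/
def agreement (S : LowerSet (mᵒᵈ × m)) : Submonoid (SL m K × SL m K) where
  carrier := {d | IsUnitriangular d.1.1 ∧ IsUnitriangular d.2.1 ∧
    ∀ y ∈ S, entry d.1.1 y = entry d.2.1 y}
  one_mem' := ⟨isUnitriangular_one, isUnitriangular_one, fun _ _ => rfl⟩
  mul_mem' := by
    rintro d e ⟨hd₁, hd₂, hd⟩ ⟨he₁, he₂, he⟩
    refine ⟨hd₁.mul he₁, hd₂.mul he₂, fun y hy => sub_eq_zero.1 ?_⟩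
    have additive := he₁.entry_mul_sub_entry_mul hd₂ (fun z hz => hd z (S.lower hz.le hy))
      fun z hz => he z (S.lower hz.le hy)
    rwa [hd y hy, he y hy, sub_self, sub_self, add_zero] at additive

variable {S : LowerSet (mᵒᵈ × m)} {x : mᵒᵈ × m} {d e : SL m K × SL m K}

theorem entryGap_eq_zero (hd : d ∈ agreement S) (hx : x ∈ S) : entryGap x d = 0 :=
  sub_eq_zero.2 (hd.2.2 x hx)

theorem entryGap_mul (hx : Set.Iio x ⊆ S) (hd : d ∈ agreement S) (he : e ∈ agreement S) :
    entryGap x (d * e) = entryGap x d + entryGap x e :=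
  he.1.entry_mul_sub_entry_mul hd.2.1 (fun y hy => hd.2.2 y (hx hy)) fun y hy => he.2.2 y (hx hy)

theorem entryGap_pow (hx : Set.Iio x ⊆ S) (hd : d ∈ agreement S) (k : ℕ) :
    entryGap x (d ^ k) = k * entryGap x d := by
  induction k with
  | zero => simp [entryGap]
  | succ k ih =>
    rw [pow_succ, entryGap_mul hx (pow_mem hd k) hd, ih]
    push_cast
    ring

theorem mem_agreement_sup_Iic (hx : Set.Iio x ⊆ S) (hd : d ∈ agreement S)
    (hdx : entryGap x d = 0) : d ∈ agreement (S ⊔ LowerSet.Iic x) := by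
  refine ⟨hd.1, hd.2.1, fun y hy => ?_⟩
  rcases LowerSet.mem_sup_iff.1 hy with hyS | hyx
  · exact hd.2.2 y hyS
  · rcases (LowerSet.mem_Iic_iff.1 hyx).eq_or_lt with rfl | hyx
    · exact sub_eq_zero.1 hdx
    · exact hd.2.2 y (hx hyx)

theorem fst_eq_snd_of_mem_agreement_top (hd : d ∈ agreement ⊤) : d.1 = d.2 :=
  Subtype.ext (Matrix.ext fun i j => hd.2.2 (OrderDual.toDual i, j) trivial)

theorem continuous_entryGap [TopologicalSpace K] [IsTopologicalRing K] (x : mᵒᵈ × m) :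
    Continuous (entryGap (K := K) x) := by
  have continuous_entry : Continuous fun A : Matrix m m K => entry A x :=
    continuous_id.matrix_elem _ _
  exact (continuous_entry.comp (continuous_subtype_val.comp continuous_fst)).sub
    (continuous_entry.comp (continuous_subtype_val.comp continuous_snd))

variable [CharZero K] [TopologicalSpace K] [IsTopologicalRing K] {H₁ H₂ : Subgroup (SL m K)}

theorem exists_oneParameter_agreement (h₁ : IsAlgebraicUnitriangular H₁)
    (h₂ : IsAlgebraicUnitriangular H₂) (hdH : d ∈ H₁.prod H₂) (hdS : d ∈ agreement S) :
    ∃ γ : K → SL m K × SL m K, Continuous γ ∧ (∀ t, γ t ∈ H₁.prod H₂) ∧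
      (∀ t, γ t ∈ agreement S) ∧
      ∀ x, Set.Iio x ⊆ S → ∀ t, entryGap x (γ t) = t * entryGap x d := by
  obtain ⟨γ₁, P₁, γ₁_cont, γ₁_mem, γ₁_nat, coe_γ₁⟩ := h₁.exists_oneParameter hdH.1
  obtain ⟨γ₂, P₂, γ₂_cont, γ₂_mem, γ₂_nat, coe_γ₂⟩ := h₂.exists_oneParameter hdH.2
  have gap_eq_eval (y t) : entryGap y (γ₁ t, γ₂ t) = (entry P₁ y - entry P₂ y).eval t := by
    simp [entryGap, entry, coe_γ₁, coe_γ₂]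
  have gap_linear (y) (hy : Set.Iio y ⊆ S) (t : K) :
      entryGap y (γ₁ t, γ₂ t) = t * entryGap y d := by
    have polynomial_eq :
        entry P₁ y - entry P₂ y = Polynomial.X * Polynomial.C (entryGap y d) := by
      refine Polynomial.eq_of_infinite_eval_eq _ _
        ((Set.infinite_range_of_injective (Nat.cast_injective (R := K))).mono ?_)
      rintro _ ⟨k, rfl⟩
      rw [Set.mem_ofPred_eq, ← gap_eq_eval, γ₁_nat, γ₂_nat, ← Prod.pow_mk, entryGap_pow hy hdS,
        Polynomial.eval_mul, Polynomial.eval_X, Polynomial.eval_C]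
    rw [gap_eq_eval, polynomial_eq, Polynomial.eval_mul, Polynomial.eval_X, Polynomial.eval_C]
  refine ⟨fun t => (γ₁ t, γ₂ t), γ₁_cont.prodMk γ₂_cont, fun t => ⟨γ₁_mem t, γ₂_mem t⟩,
    fun t => ⟨h₁.isUnitriangular _ (γ₁_mem t), h₂.isUnitriangular _ (γ₂_mem t), fun y hy => ?_⟩,
    gap_linear⟩
  refine sub_eq_zero.1 ((gap_linear y (fun z hz => S.lower (le_of_lt hz) hy) t).trans ?_)
  rw [entryGap_eq_zero hdS hy, mul_zero]

theorem exists_continuous_section_entryGap (h₁ : IsAlgebraicUnitriangular H₁)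
    (h₂ : IsAlgebraicUnitriangular H₂) (hdH : d ∈ H₁.prod H₂) (hdS : d ∈ agreement S)
    (hx : Set.Iio x ⊆ S) (hdx : entryGap x d ≠ 0) :
    ∃ σ : K → SL m K × SL m K, Continuous σ ∧ (∀ t, σ t ∈ H₁.prod H₂) ∧
      (∀ t, σ t ∈ agreement S) ∧ ∀ t, entryGap x (σ t) = t := by
  obtain ⟨γ, γ_cont, γ_mem, γ_agree, γ_gap⟩ := exists_oneParameter_agreement h₁ h₂ hdH hdS
  exact ⟨fun t => γ (t * (entryGap x d)⁻¹), γ_cont.comp (continuous_mul_const _),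
    fun t => γ_mem _, fun t => γ_agree _,
    fun t => by rw [γ_gap x hx, inv_mul_cancel_right₀ hdx]⟩

end Agreement

theorem lowerSet_induction {α : Type*} [PartialOrder α] [Finite α] {p : LowerSet α → Prop}
    (bot : p ⊥)
    (sup_Iic : ∀ (S : LowerSet α) x, Set.Iio x ⊆ S → p S → p (S ⊔ LowerSet.Iic x)) : p ⊤ := by
  obtain ⟨S, hS⟩ := (Set.toFinite {S : LowerSet α | p S}).exists_maximal ⟨⊥, bot⟩
  suffices S = ⊤ from this ▸ hS.prop
  by_contra hne
  obtain ⟨x, hx⟩ := (Set.toFinite (S : Set α)ᶜ).exists_minimal <| Set.nonempty_compl.2 fun h =>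
    hne (SetLike.coe_injective (h.trans LowerSet.coe_top.symm))
  have hxS : Set.Iio x ⊆ S := fun y hyx => by_contra fun hyS => hx.not_lt hyS hyx
  exact hx.prop (hS.le_of_ge (sup_Iic S x hxS hS.prop) le_sup_left
    (LowerSet.mem_sup_iff.2 (Or.inr le_rfl)))

section Properness

variable {ι m K : Type*} [LinearOrder m] [Fintype m] [Field K] [CharZero K] [TopologicalSpace K]
  [IsTopologicalRing K] {H₁ H₂ : Subgroup (SL m K)} {l : Filter ι} {h : ι → SL m K × SL m K}
  {z : SL m K}

/-- Left multiplication by `((h k).1, (h k).1)` does not change the gap of `d k` at `x` and turns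
`d k` into `((h * d) k).1` and `((h k).1 * (h k).2⁻¹) * ((h * d) k).2`, both of which converge. So
the gap converges, and so does the one-parameter element that cancels it. -/
theorem exists_agreement_sup_Iic_tendsto (h₁ : IsAlgebraicUnitriangular H₁)
    (h₂ : IsAlgebraicUnitriangular H₂) (hH : ∀ k, h k ∈ H₁.prod H₂)
    (hz : Tendsto (fun k => (h k).1 * (h k).2⁻¹) l (𝓝 z)) {S : LowerSet (mᵒᵈ × m)} {x : mᵒᵈ × m}
    (hx : Set.Iio x ⊆ S) {d : ι → SL m K × SL m K} (hdH : ∀ k, d k ∈ H₁.prod H₂)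
    (hdS : ∀ k, d k ∈ agreement S) {w : SL m K × SL m K}
    (hw : Tendsto (fun k => h k * d k) l (𝓝 w)) :
    ∃ d' : ι → SL m K × SL m K, (∀ k, d' k ∈ H₁.prod H₂) ∧
      (∀ k, d' k ∈ agreement (S ⊔ LowerSet.Iic x)) ∧
      ∃ w', Tendsto (fun k => h k * d' k) l (𝓝 w') := by
  by_cases hgap : ∀ k, entryGap x (d k) = 0
  · exact ⟨d, hdH, fun k => mem_agreement_sup_Iic hx (hdS k) (hgap k), w, hw⟩
  obtain ⟨k₀, hk₀⟩ := not_forall.1 hgap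
  obtain ⟨σ, σ_cont, σ_mem, σ_agree, σ_gap⟩ :=
    exists_continuous_section_entryGap h₁ h₂ (hdH k₀) (hdS k₀) hx hk₀
  have gap_tendsto : Tendsto (fun k => entryGap x (d k)) l (𝓝 (entryGap x (w.1, z * w.2))) := by
    have pair_tendsto : Tendsto (fun k => ((h k).1, (h k).1) * d k) l (𝓝 (w.1, z * w.2)) := by
      have fst_tendsto := (continuous_fst.tendsto w).comp hw
      have snd_tendsto := hz.mul ((continuous_snd.tendsto w).comp hw)
      refine (fst_tendsto.prodMk_nhds snd_tendsto).congr fun k => ?_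
      simp [Prod.ext_iff, mul_assoc]
    refine (((continuous_entryGap x).tendsto _).comp pair_tendsto).congr fun k => ?_
    have h₁k := h₁.isUnitriangular _ (hH k).1
    have diag_agree : ((h k).1, (h k).1) ∈ agreement S := ⟨h₁k, h₁k, fun _ _ => rfl⟩
    rw [Function.comp_apply, entryGap_mul hx diag_agree (hdS k), entryGap, sub_self, zero_add]
  refine ⟨fun k => d k * σ (-entryGap x (d k)), fun k => mul_mem (hdH k) (σ_mem _), fun k => ?_,
    _, (hw.mul ((σ_cont.tendsto _).comp gap_tendsto.neg)).congr fun k => mul_assoc _ _ _⟩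
  refine mem_agreement_sup_Iic hx (mul_mem (hdS k) (σ_agree _)) ?_
  rw [entryGap_mul hx (hdS k) (σ_agree _), σ_gap, add_neg_cancel]

/-- The map `(a, b) ↦ a * b⁻¹` is proper on `H₁ × H₂` modulo the diagonal `H₁ ⊓ H₂`. The correction
`d = h⁻¹` makes `h * d` converge trivially; it is then modified, keeping convergence, until its two
components agree at every position. -/
theorem exists_mem_inf_tendsto_mul (h₁ : IsAlgebraicUnitriangular H₁)
    (h₂ : IsAlgebraicUnitriangular H₂) (hH : ∀ k, h k ∈ H₁.prod H₂)
    (hz : Tendsto (fun k => (h k).1 * (h k).2⁻¹) l (𝓝 z)) :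
    ∃ c : ι → SL m K, (∀ k, c k ∈ H₁ ⊓ H₂) ∧ ∃ w₁ w₂,
      Tendsto (fun k => (h k).1 * c k) l (𝓝 w₁) ∧ Tendsto (fun k => (h k).2 * c k) l (𝓝 w₂) := by
  obtain ⟨d, hdH, hdS, w, hw⟩ : ∃ d : ι → SL m K × SL m K, (∀ k, d k ∈ H₁.prod H₂) ∧
      (∀ k, d k ∈ agreement ⊤) ∧ ∃ w, Tendsto (fun k => h k * d k) l (𝓝 w) := by
    refine lowerSet_induction (p := fun S => ∃ d : ι → SL m K × SL m K,
      (∀ k, d k ∈ H₁.prod H₂) ∧ (∀ k, d k ∈ agreement S) ∧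
        ∃ w, Tendsto (fun k => h k * d k) l (𝓝 w)) ?_ ?_
    · exact ⟨fun k => (h k)⁻¹, fun k => inv_mem (hH k),
        fun k => ⟨h₁.isUnitriangular _ (inv_mem (hH k).1), h₂.isUnitriangular _ (inv_mem (hH k).2),
          fun y hy => hy.elim⟩, 1, by simpa using tendsto_const_nhds⟩
    · rintro S x hx ⟨d, hdH, hdS, w, hw⟩
      exact exists_agreement_sup_Iic_tendsto h₁ h₂ hH hz hx hdH hdS hw
  have fst_eq_snd (k) : (d k).1 = (d k).2 := fst_eq_snd_of_mem_agreement_top (hdS k)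
  have fst_mem_right (k) : (d k).1 ∈ H₂ := fst_eq_snd k ▸ (hdH k).2
  exact ⟨fun k => (d k).1, fun k => ⟨(hdH k).1, fst_mem_right k⟩, w.1, w.2,
    (continuous_fst.tendsto w).comp hw,
    ((continuous_snd.tendsto w).comp hw).congr fun k => by simp [fst_eq_snd]⟩

end Properness

section Nearness

/-- Nearness of the coset `g H` to a family `u` along a filter. For `l = hyperfilter ℕ` the family
`u` represents an element `α` of the nonstandard extension, and the quotient `u (g h)⁻¹` tending
to `1` says that `α` is an infinitesimal multiple of a point of `g H^♯`. -/
def IsNear {ι Γ : Type*} [Group Γ] [TopologicalSpace Γ] (l : Filter ι) (u : ι → Γ) (g : Γ)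
    (H : Subgroup Γ) : Prop :=
  ∃ h : ι → Γ, (∀ k, h k ∈ H) ∧ Tendsto (fun k => u k * (g * h k)⁻¹) l (𝓝 1)

section TopologicalGroup

variable {ι Γ : Type*} [Group Γ] [TopologicalSpace Γ] [IsTopologicalGroup Γ] {l : Filter ι}
  {u a b : ι → Γ} {g g₁ g₂ w : Γ}

theorem tendsto_mul_inv_of_tendsto_mul_mul_inv
    (ha : Tendsto (fun k => u k * (g₁ * a k)⁻¹) l (𝓝 1))
    (hb : Tendsto (fun k => u k * (g₂ * b k)⁻¹) l (𝓝 1)) :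
    Tendsto (fun k => a k * (b k)⁻¹) l (𝓝 (g₁⁻¹ * g₂)) := by
  have h := ((ha.inv.mul hb).const_mul g₁⁻¹).mul_const g₂
  rw [inv_one, mul_one, mul_one] at h
  exact h.congr fun k => by group

theorem tendsto_mul_mul_inv_of_tendsto_mul
    (ha : Tendsto (fun k => u k * (g * a k)⁻¹) l (𝓝 1))
    (hab : Tendsto (fun k => a k * b k) l (𝓝 w)) :
    Tendsto (fun k => u k * (g * w * (b k)⁻¹)⁻¹) l (𝓝 1) := by
  have h := ha.mul ((hab.const_mul g).mul_const (w⁻¹ * g⁻¹))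
  rw [show 1 * (g * w * (w⁻¹ * g⁻¹)) = 1 by group] at h
  exact h.congr fun k => by group

end TopologicalGroup

variable {ι m K : Type*} [LinearOrder m] [Fintype m] [Field K] [CharZero K] [TopologicalSpace K]
  [IsTopologicalRing K] [T1Space K] {l : Filter ι} [l.NeBot] {u : ι → SL m K}

theorem IsNear.exists_mul_eq_mul_isNear_inf {g₁ g₂ : SL m K} {H₁ H₂ : Subgroup (SL m K)}
    (h₁ : IsAlgebraicUnitriangular H₁) (h₂ : IsAlgebraicUnitriangular H₂)
    (near₁ : IsNear l u g₁ H₁) (near₂ : IsNear l u g₂ H₂) :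
    ∃ x ∈ H₁, ∃ y ∈ H₂, g₁ * x = g₂ * y ∧ IsNear l u (g₁ * x) (H₁ ⊓ H₂) := by
  obtain ⟨a, ha, hua⟩ := near₁
  obtain ⟨b, hb, hub⟩ := near₂
  have quotient_tendsto := tendsto_mul_inv_of_tendsto_mul_mul_inv hua hub
  obtain ⟨c, hc, x, y, hx, hy⟩ :=
    exists_mem_inf_tendsto_mul h₁ h₂ (h := fun k => (a k, b k)) (fun k => ⟨ha k, hb k⟩)
      quotient_tendsto
  have x_mem : x ∈ H₁ := h₁.isClosed.mem_of_tendsto hx (.of_forall fun k => mul_mem (ha k) (hc k).1)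
  have y_mem : y ∈ H₂ := h₂.isClosed.mem_of_tendsto hy (.of_forall fun k => mul_mem (hb k) (hc k).2)
  have quotient_eq : x * y⁻¹ = g₁⁻¹ * g₂ :=
    tendsto_nhds_unique ((hx.mul hy.inv).congr fun k => by group) quotient_tendsto
  refine ⟨x, x_mem, y, y_mem, ?_, fun k => (c k)⁻¹, fun k => inv_mem (hc k),
    tendsto_mul_mul_inv_of_tendsto_mul hua hx⟩
  rwa [mul_inv_eq_iff_eq_mul, mul_assoc, eq_inv_mul_iff_mul_eq] at quotient_eq

theorem stmt2_general {g₀ : SL m K} {H₀ : Subgroup (SL m K)} (h₀ : IsAlgebraicUnitriangular H₀)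
    (near₀ : IsNear l u g₀ H₀) :
    ∃ (g : SL m K) (H : Subgroup (SL m K)), IsAlgebraicUnitriangular H ∧ IsNear l u g H ∧
      ∀ (g' : SL m K) (H' : Subgroup (SL m K)), IsAlgebraicUnitriangular H' → IsNear l u g' H' →
        {(g : Matrix m m K)} * matrices H ⊆ {(g' : Matrix m m K)} * matrices H' := by
  let nearCosets : Set (Set (Matrix m m K)) := {C | ∃ (g : SL m K) (H : Subgroup (SL m K)),
    IsAlgebraicUnitriangular H ∧ IsNear l u g H ∧ C = {(g : Matrix m m K)} * matrices H}
  have isZariskiClosed_of_mem : ∀ C ∈ nearCosets, IsZariskiClosed C := by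
    rintro _ ⟨g, H, hH, -, rfl⟩
    exact hH.isZariskiClosed_coset g
  obtain ⟨_, ⟨g, H, hH, near, rfl⟩, minimal⟩ :=
    exists_minimal_of_isZariskiClosed isZariskiClosed_of_mem ⟨_, g₀, H₀, h₀, near₀, rfl⟩
  refine ⟨g, H, hH, near, fun g' H' hH' near' => ?_⟩
  obtain ⟨x, hx, y, hy, hxy, near_inf⟩ := near.exists_mul_eq_mul_isNear_inf hH hH' near'
  have inf_subset_left : {((g * x : SL m K) : Matrix m m K)} * matrices (H ⊓ H') ⊆
      {(g : Matrix m m K)} * matrices H :=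
    singleton_mul_matrices_subset_iff.2 ⟨by simpa using hx, inf_le_left⟩
  have inf_subset_right : {((g * x : SL m K) : Matrix m m K)} * matrices (H ⊓ H') ⊆
      {(g' : Matrix m m K)} * matrices H' :=
    singleton_mul_matrices_subset_iff.2 ⟨by simpa [hxy] using hy, inf_le_right⟩
  exact (minimal ⟨_, _, hH.inf hH', near_inf, rfl⟩ inf_subset_left).trans inf_subset_right

end Nearness

section RealUnipotentGroup

variable {n : ℕ}

theorem mem_UTset_iff {A : Mat n ℝ} : A ∈ UTset n ↔ IsUnitriangular A :=
  and_comm.trans (and_congr_left' ⟨fun h i j => h i j, fun h _ _ hij => h hij⟩)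

theorem isZariskiClosed_UTset : IsZariskiClosed (UTset n) := by
  refine ⟨{p | (∃ i, p = MvPolynomial.X (i, i) - 1) ∨ ∃ i j, j < i ∧ p = MvPolynomial.X (i, j)}, ?_⟩
  ext A
  constructor
  · rintro ⟨diag, lower⟩ p (⟨i, rfl⟩ | ⟨i, j, hji, rfl⟩)
    · simp [diag]
    · simpa using lower i j hji
  · intro h
    refine ⟨fun i => ?_, fun i j hji => ?_⟩
    · simpa [sub_eq_zero] using h _ (Or.inl ⟨i, rfl⟩)
    · simpa using h _ (Or.inr ⟨i, j, hji, rfl⟩)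

theorem IsAlgebraicUnitriangular.isRealUnipotentGroup {H : Subgroup (SL (Fin n) ℝ)}
    (hH : IsAlgebraicUnitriangular H) : IsRealUnipotentGroup n (matrices H) := by
  have subset_UTset : matrices H ⊆ UTset n := by
    rintro _ ⟨g, hg, rfl⟩
    exact mem_UTset_iff.2 (hH.isUnitriangular g hg)
  refine ⟨?_, ⟨1, H.one_mem, rfl⟩, ?_, ?_⟩
  · obtain ⟨S, hS⟩ := hH.isZariskiClosed
    exact ⟨S, (Set.inter_eq_right.2 subset_UTset).symm.trans (congrArg (UTset n ∩ ·) hS)⟩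
  · rintro _ ⟨a, ha, rfl⟩ _ ⟨b, hb, rfl⟩
    exact ⟨a * b, H.mul_mem ha hb, rfl⟩
  · rintro _ ⟨a, ha, rfl⟩
    exact ⟨a⁻¹, H.inv_mem ha, (inv_coe_specialLinearGroup a).symm⟩

theorem IsRealUnipotentGroup.exists_eq_matrices {G : Set (Mat n ℝ)}
    (hG : IsRealUnipotentGroup n G) :
    ∃ H : Subgroup (SL (Fin n) ℝ), IsAlgebraicUnitriangular H ∧ G = matrices H := by
  obtain ⟨⟨S, hS⟩, one_mem, mul_mem, inv_mem⟩ := hG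
  have unitriangular (A) (hA : A ∈ G) : IsUnitriangular A := mem_UTset_iff.1 (hS.le hA).1
  let H : Subgroup (SL (Fin n) ℝ) :=
    { carrier := {g | (g : Mat n ℝ) ∈ G}
      one_mem' := one_mem
      mul_mem' := fun ha hb => mul_mem _ ha _ hb
      inv_mem' := fun {g} hg => Set.mem_ofPred.2 (inv_coe_specialLinearGroup g ▸ inv_mem _ hg) }
  have eq_matrices : G = matrices H :=
    Set.Subset.antisymm (fun A hA => ⟨⟨A, (unitriangular A hA).det_eq_one⟩, hA, rfl⟩)
      (Set.image_subset_iff.2 fun g hg => hg)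
  have isZariskiClosed_G : IsZariskiClosed G := by
    rw [hS]
    exact isZariskiClosed_UTset.inter ⟨S, rfl⟩
  exact ⟨H, ⟨fun g hg => unitriangular _ hg, eq_matrices ▸ isZariskiClosed_G⟩, eq_matrices⟩

end RealUnipotentGroup

section Hyperreal

variable {n : ℕ}

theorem matOfSeq_eq_iff {u v : ℕ → Mat n ℝ} :
    matOfSeq n u = matOfSeq n v ↔ ∀ᶠ k in hyperfilter ℕ, u k = v k := by
  simp only [← Matrix.ext_iff, eventually_all]
  exact forall₂_congr fun i j => Filter.Germ.coe_eq

theorem matOfSeq_mul (u v : ℕ → Mat n ℝ) :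
    matOfSeq n u * matOfSeq n v = matOfSeq n fun k => u k * v k := by
  let toHyperreal : (ℕ → ℝ) →+* Hyperreal := Filter.Germ.coeRingHom (hyperfilter ℕ : Filter ℕ)
  ext i j
  calc (matOfSeq n u * matOfSeq n v) i j
      = ∑ r, toHyperreal (fun k => u k i r) * toHyperreal (fun k => v k r j) := rfl
    _ = toHyperreal (∑ r, (fun k => u k i r) * fun k => v k r j) := by simp only [map_sum, map_mul]
    _ = toHyperreal (fun k => (u k * v k) i j) := by
      congr 1
      ext k
      simp [Matrix.mul_apply]

theorem infinitesimal_matOfSeq_sub_one_iff {u : ℕ → Mat n ℝ} :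
    (∀ i j, Hyperreal.Infinitesimal (matOfSeq n u i j - (1 : Mat n Hyperreal) i j)) ↔
      Tendsto u (hyperfilter ℕ) (𝓝 1) := by
  have entry_sub (i j) : matOfSeq n u i j - (1 : Mat n Hyperreal) i j =
      Hyperreal.ofSeq fun k => u k i j - (1 : Mat n ℝ) i j := by
    rcases eq_or_ne i j with rfl | h
    · simp only [Matrix.one_apply_eq]
      rfl
    · simp only [Matrix.one_apply_ne h]
      rfl
  have entry_iff (i j) :
      Hyperreal.Infinitesimal (matOfSeq n u i j - (1 : Mat n Hyperreal) i j) ↔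
        Tendsto (fun k => u k i j) (hyperfilter ℕ) (𝓝 ((1 : Mat n ℝ) i j)) := by
    rw [entry_sub, ← tendsto_sub_nhds_zero_iff]
    exact Hyperreal.isSt_ofSeq_iff_tendsto
  simp only [entry_iff]
  exact (forall_congr' fun i => tendsto_pi_nhds.symm).trans tendsto_pi_nhds.symm

theorem mem_matSharp_matrices {H : Subgroup (SL (Fin n) ℝ)} {A : Mat n Hyperreal} :
    A ∈ matSharp n (matrices H) ↔
      ∃ u : ℕ → SL (Fin n) ℝ, (∀ k, u k ∈ H) ∧ A = matOfSeq n fun k => u k := by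
  constructor
  · rintro ⟨v, hv, rfl⟩
    have lift_entry (k) : ∃ g ∈ H, v k ∈ matrices H → v k = (g : Mat n ℝ) := by
      by_cases hk : v k ∈ matrices H
      · obtain ⟨g, hg, hgv⟩ := hk
        exact ⟨g, hg, fun _ => hgv.symm⟩
      · exact ⟨1, H.one_mem, fun h => absurd h hk⟩
    choose u hu hvu using lift_entry
    exact ⟨u, hu, matOfSeq_eq_iff.2 (hv.mono hvu)⟩
  · rintro ⟨u, hu, rfl⟩
    exact ⟨_, .of_forall fun k => coe_mem_matrices.2 (hu k), rfl⟩

theorem mem_muSet_matrices {G : Subgroup (SL (Fin n) ℝ)} {A : Mat n Hyperreal} :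
    A ∈ muSet n (matrices G) ↔ ∃ u : ℕ → SL (Fin n) ℝ, (∀ k, u k ∈ G) ∧
      Tendsto u (hyperfilter ℕ) (𝓝 1) ∧ A = matOfSeq n fun k => u k := by
  have tendsto_iff (u : ℕ → SL (Fin n) ℝ) : Tendsto u (hyperfilter ℕ) (𝓝 1) ↔
      Tendsto (fun k => (u k : Mat n ℝ)) (hyperfilter ℕ) (𝓝 1) := tendsto_subtype_rng
  constructor
  · rintro ⟨hA, infinitesimal⟩
    obtain ⟨u, hu, rfl⟩ := mem_matSharp_matrices.1 hA
    exact ⟨u, hu, (tendsto_iff u).2 (infinitesimal_matOfSeq_sub_one_iff.1 infinitesimal), rfl⟩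
  · rintro ⟨u, hu, u_tendsto, rfl⟩
    exact ⟨mem_matSharp_matrices.2 ⟨u, hu, rfl⟩,
      infinitesimal_matOfSeq_sub_one_iff.2 ((tendsto_iff u).1 u_tendsto)⟩

theorem nearCoset_matOfSeq_iff {G H : Subgroup (SL (Fin n) ℝ)} (hHG : H ≤ G)
    {g : SL (Fin n) ℝ} (hg : g ∈ G) {u : ℕ → SL (Fin n) ℝ} (hu : ∀ k, u k ∈ G) :
    NearCoset n (matrices G) g (matrices H) (matOfSeq n fun k => u k) ↔
      IsNear (hyperfilter ℕ : Filter ℕ) u g H := by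
  have product_eq (v h : ℕ → SL (Fin n) ℝ) : (matOfSeq n fun k => v k) *
      (matCast (g : Mat n ℝ) * matOfSeq n fun k => h k) =
      matOfSeq n fun k => (v k * (g * h k) : SL (Fin n) ℝ) := by
    rw [show matCast (g : Mat n ℝ) = matOfSeq n fun _ => g from rfl, matOfSeq_mul, matOfSeq_mul]
    rfl
  constructor
  · rintro ⟨_, hv, _, ⟨_, rfl, _, hh', rfl⟩, hvh⟩
    obtain ⟨v, -, v_tendsto, rfl⟩ := mem_muSet_matrices.1 hv
    obtain ⟨h, hh, rfl⟩ := mem_matSharp_matrices.1 hh'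
    refine ⟨h, hh, v_tendsto.congr' ?_⟩
    filter_upwards [matOfSeq_eq_iff.1 ((product_eq v h).symm.trans hvh)] with k hk
    exact eq_mul_inv_of_mul_eq (Subtype.ext hk)
  · rintro ⟨h, hh, h_tendsto⟩
    have quotient_mem (k) : u k * (g * h k)⁻¹ ∈ G :=
      G.mul_mem (hu k) (G.inv_mem (G.mul_mem hg (hHG (hh k))))
    refine ⟨_, mem_muSet_matrices.2 ⟨_, quotient_mem, h_tendsto, rfl⟩, _,
      Set.mul_mem_mul rfl (mem_matSharp_matrices.2 ⟨h, hh, rfl⟩), ?_⟩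
    refine (product_eq _ h).trans ?_
    simp only [inv_mul_cancel_right]

end Hyperreal

/-- existence of a smallest coset near `α`. -/
theorem stmt2 {n : ℕ} (G : Set (Mat n ℝ)) (hG : IsRealUnipotentGroup n G)
    (α : Mat n Hyperreal) (hα : α ∈ matSharp n G) :
    ∃ g ∈ G, ∃ H : Set (Mat n ℝ), IsRealAlgSubgroup n G H ∧ NearCoset n G g H α ∧
      ∀ g' ∈ G, ∀ H' : Set (Mat n ℝ), IsRealAlgSubgroup n G H' → NearCoset n G g' H' α →
        {g} * H ⊆ {g'} * H' := by
  obtain ⟨Γ, hΓ, rfl⟩ := hG.exists_eq_matrices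
  obtain ⟨u, hu, rfl⟩ := mem_matSharp_matrices.1 hα
  have near_self : IsNear (hyperfilter ℕ : Filter ℕ) u 1 Γ :=
    ⟨u, hu, by simp⟩
  obtain ⟨g, H, hH, near, smallest⟩ := stmt2_general hΓ near_self
  obtain ⟨hg, hHΓ⟩ := singleton_mul_matrices_subset_iff.1 (smallest 1 Γ hΓ near_self)
  rw [inv_one, one_mul] at hg
  refine ⟨g, coe_mem_matrices.2 hg, matrices H, ⟨Set.image_mono hHΓ, hH.isRealUnipotentGroup⟩,
    (nearCoset_matOfSeq_iff hHΓ hg hu).2 near, ?_⟩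
  rintro _ ⟨g', hg', rfl⟩ _ ⟨hH'Γ, unipotent⟩ near'
  obtain ⟨H', hH', rfl⟩ := unipotent.exists_eq_matrices
  have hH'Γ : H' ≤ Γ := (Set.image_subset_image_iff Subtype.val_injective).1 hH'Γ
  exact smallest g' H' hH' ((nearCoset_matOfSeq_iff hH'Γ hg' hu).1 near')
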